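/- Let Ψ : [B(H)^n]_1 → [B(H)^n]_1 be a free holomorphic map with Ψ(0)=0. Then Ψ is a free holomorphic automorphism of [B(H)^n]_1 if and only if there is a unitary operator U on ℂ^n such that Ψ(X_1,...,X_n) = Φ_U(X_1,...,X_n) := [X_1,...,X_n]U for all (X_1,...,X_n) ∈ [B(H)^n]_1. -/

import Mathlib

noncomputable section

open Filter

namespace NC

variable {H : Type*} [NormedAddCommGroup H] [InnerProductSpace ℂ H] [CompleteSpace H]

/-- The product `X_α = X_{i₁} ⋯ X_{i_k}` for a word `α = g_{i₁} ⋯ g_{i_k}`. -/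
def wordProd {n : ℕ} (X : Fin n → H →L[ℂ] H) (w : List (Fin n)) : H →L[ℂ] H :=
  (w.map X).prod

/-- The row norm `‖X₁X₁^* + ⋯ + XₙXₙ^*‖^{1/2}` of a tuple. -/
def rowNorm {n : ℕ} (X : Fin n → H →L[ℂ] H) : ℝ :=
  Real.sqrt ‖∑ i, X i * ContinuousLinearMap.adjoint (X i)‖

/-- The open operatorial ball `[B(H)ⁿ]_γ`. -/
def ball (n : ℕ) (H : Type*) [NormedAddCommGroup H] [InnerProductSpace ℂ H]
    [CompleteSpace H] (γ : ℝ) : Set (Fin n → H →L[ℂ] H) :=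
  {X | rowNorm X < γ}

/-- The closed operatorial ball `[B(H)ⁿ]_γ⁻`. -/
def cball (n : ℕ) (H : Type*) [NormedAddCommGroup H] [InnerProductSpace ℂ H]
    [CompleteSpace H] (γ : ℝ) : Set (Fin n → H →L[ℂ] H) :=
  {X | rowNorm X ≤ γ}

/-- The homogeneous part of degree `k` of the power series with coefficients `a`,
evaluated at `X`:  `∑_{|α|=k} a_α X_α`. -/
def homog {n : ℕ} (a : List (Fin n) → ℂ) (X : Fin n → H →L[ℂ] H) (k : ℕ) :
    H →L[ℂ] H :=
  ∑ w : Fin k → Fin n, a (List.ofFn w) • wordProd X (List.ofFn w)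

/-- `RepOn γ a F` means that the free power series with coefficients `a` converges in
operator norm to `F X` at every point `X` of the open ball `[B(H)ⁿ]_γ`; i.e. `F` is the
free holomorphic function with coefficients `a` on `[B(H)ⁿ]_γ`. -/
def RepOn {n : ℕ} (γ : ℝ) (a : List (Fin n) → ℂ)
    (F : (Fin n → H →L[ℂ] H) → H →L[ℂ] H) : Prop :=
  ∀ X ∈ ball n H γ,
    Tendsto (fun N => ∑ k ∈ Finset.range N, homog a X k) atTop (nhds (F X))

/-- `F` is a free holomorphic function (with scalar coefficients) on `[B(H)ⁿ]_γ`. -/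
def IsFreeHolo {n : ℕ} (γ : ℝ) (F : (Fin n → H →L[ℂ] H) → H →L[ℂ] H) : Prop :=
  ∃ a, RepOn γ a F

/-- `F` is a free holomorphic map `[B(H)ⁿ]_γ → B(H)^m`. -/
def IsFreeHoloMap {n m : ℕ} (γ : ℝ)
    (F : (Fin n → H →L[ℂ] H) → Fin m → H →L[ℂ] H) : Prop :=
  ∀ i, IsFreeHolo γ fun X => F X i

/-- `Ψ` is a free holomorphic automorphism of `[B(H)ⁿ]_γ`: a free holomorphic map of the
ball to itself admitting a free holomorphic inverse. -/
def IsFreeAut {n : ℕ} (γ : ℝ) (Ψ : (Fin n → H →L[ℂ] H) → Fin n → H →L[ℂ] H) : Prop :=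
  IsFreeHoloMap γ Ψ ∧ Set.MapsTo Ψ (ball n H γ) (ball n H γ) ∧
    ∃ Φ, IsFreeHoloMap γ Φ ∧ Set.MapsTo Φ (ball n H γ) (ball n H γ) ∧
      (∀ X ∈ ball n H γ, Φ (Ψ X) = X) ∧ ∀ X ∈ ball n H γ, Ψ (Φ X) = X

end NC

/-!
Evaluating a free power series on multiples of the (truncated) left creation operators of a Fock
space inside `H`, and applying the result to the vacuum vector, displays its coefficients along an
orthonormal family. By Bessel's inequality a series `F` with `‖F‖ ≤ γ` on the ball of radius `γ`
therefore satisfies `∑ |a_w|² γ^(2|w|) ≤ γ²`; in particular every column of the derivative at the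
origin of a self-map of the ball has Euclidean norm at most one. For an automorphism fixing the
origin and its inverse the derivatives `A`, `B` satisfy `A B = 1`, and two such matrices with
columns in the unit ball can only be inverse to each other if `B = Aᴴ`. So `A` is unitary, its
columns have norm exactly one, and the coefficient inequality leaves no room for the coefficients
of degree other than one.
-/

namespace NC

open ContinuousLinearMap InnerProductSpace
open scoped Matrix

section Orthonormal

variable {𝕜 E ι : Type*} [RCLike 𝕜] [NormedAddCommGroup E] [InnerProductSpace 𝕜 E]

lemma exists_orthonormal_of_countable [Countable ι] (hE : ¬ FiniteDimensional 𝕜 E) :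
    ∃ e : ι → E, Orthonormal 𝕜 e := by
  let b := Module.Basis.ofVectorSpace 𝕜 E
  have : Infinite (Module.Basis.ofVectorSpaceIndex 𝕜 E) :=
    not_finite_iff_infinite.mp fun _ => hE (Module.Finite.of_basis b)
  obtain ⟨f, hf⟩ := exists_injective_nat ι
  have hb : LinearIndependent 𝕜 (b ∘ Infinite.natEmbedding _) :=
    b.linearIndependent.comp _ (Infinite.natEmbedding _).injective
  exact ⟨_, (gramSchmidtNormed_orthonormal hb).comp f hf⟩

end Orthonormal

section Matrix

open Matrix

open scoped ComplexOrder

variable {𝕜 m n : Type*} [RCLike 𝕜] [Fintype m] [Fintype n]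

lemma trace_conjTranspose_mul_self_eq_sum (A : Matrix m n 𝕜) :
    (Aᴴ * A).trace = ((∑ j, ∑ i, ‖A i j‖ ^ 2 : ℝ) : 𝕜) := by
  simp [Matrix.trace, Matrix.mul_apply, RCLike.conj_mul]

lemma sum_norm_sq_col_of_mem_unitaryGroup [DecidableEq n] {U : Matrix n n 𝕜}
    (hU : U ∈ unitaryGroup n 𝕜) (j : n) : ∑ i, ‖U i j‖ ^ 2 = 1 := by
  have hjj : (star U * U) j j = 1 := by rw [mem_unitaryGroup_iff'.mp hU, one_apply_eq]
  rw [← RCLike.ofReal_inj (K := 𝕜), RCLike.ofReal_one, ← hjj]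
  simp [Matrix.mul_apply, RCLike.conj_mul]

/- Expanding the square, `‖Aᴴ - B‖² = ‖A‖² + ‖B‖² - 2 Re tr (A * B) ≤ 0` in the
Hilbert-Schmidt norm. -/
lemma eq_conjTranspose_of_mul_eq_one [DecidableEq m] {A : Matrix m n 𝕜} {B : Matrix n m 𝕜}
    (hAB : A * B = 1) (hA : ∑ j, ∑ i, ‖A i j‖ ^ 2 ≤ Fintype.card m)
    (hB : ∑ j, ∑ i, ‖B i j‖ ^ 2 ≤ Fintype.card m) : B = Aᴴ := by
  have htrace : ((Aᴴ - B)ᴴ * (Aᴴ - B)).trace =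
      (Aᴴ * A).trace + (Bᴴ * B).trace - (Fintype.card m + Fintype.card m) := by
    have hBA : Bᴴ * Aᴴ = 1 := by rw [← conjTranspose_mul, hAB, conjTranspose_one]
    rw [conjTranspose_sub, conjTranspose_conjTranspose, Matrix.sub_mul, Matrix.mul_sub,
      Matrix.mul_sub, hAB, hBA, trace_sub, trace_sub, trace_sub, trace_one, trace_mul_comm A]
    ring
  simp only [trace_conjTranspose_mul_self_eq_sum] at htrace
  have hle : ∑ j, ∑ i, ‖(Aᴴ - B) i j‖ ^ 2 ≤ 0 := by
    have := congrArg RCLike.re htrace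
    simp only [map_sub, map_add, RCLike.ofReal_re, RCLike.natCast_re] at this
    linarith
  have hzero : ((Aᴴ - B)ᴴ * (Aᴴ - B)).trace = 0 := by
    rw [trace_conjTranspose_mul_self_eq_sum, le_antisymm hle (by positivity), RCLike.ofReal_zero]
  exact (sub_eq_zero.mp (trace_conjTranspose_mul_self_eq_zero_iff.mp hzero)).symm

end Matrix

variable {H : Type*} [NormedAddCommGroup H] [InnerProductSpace ℂ H] {n m l : ℕ} {γ δ : ℝ}

section RowMap

open Matrix

/-- The linear map `Φ_U : X ↦ [X₁, …, Xₙ] U` on row operators, the entries of `U` acting as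
scalar multiples of the identity. -/
def rowMap (U : Matrix (Fin n) (Fin m) ℂ) (X : Fin n → H →L[ℂ] H) : Fin m → H →L[ℂ] H :=
  X ᵥ* U.map (algebraMap ℂ (H →L[ℂ] H))

lemma rowMap_apply (U : Matrix (Fin n) (Fin m) ℂ) (X : Fin n → H →L[ℂ] H) (j : Fin m) :
    rowMap U X j = ∑ i, U i j • X i := by
  simp only [rowMap, vecMul, dotProduct, map_apply, Algebra.smul_def, Algebra.commutes]

lemma rowMap_one (X : Fin n → H →L[ℂ] H) : rowMap 1 X = X := by
  rw [rowMap, Matrix.map_one _ (map_zero _) (map_one _), vecMul_one]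

lemma rowMap_rowMap (U : Matrix (Fin n) (Fin m) ℂ) (V : Matrix (Fin m) (Fin l) ℂ)
    (X : Fin n → H →L[ℂ] H) : rowMap V (rowMap U X) = rowMap (U * V) X := by
  rw [rowMap, rowMap, vecMul_vecMul, rowMap, Matrix.map_mul]

end RowMap

section PowerSeries

lemma wordProd_smul (c : ℂ) (X : Fin n → H →L[ℂ] H) (w : List (Fin n)) :
    wordProd (c • X) w = c ^ w.length • wordProd X w := by
  induction w with
  | nil => simp [wordProd]
  | cons i w ih =>
    change (c • X i) * wordProd (c • X) w = _ • (X i * wordProd X w)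
    rw [ih, smul_mul_smul_comm, List.length_cons, pow_succ']

lemma homog_smul (a : List (Fin n) → ℂ) (c : ℂ) (X : Fin n → H →L[ℂ] H) (k : ℕ) :
    homog a (c • X) k = c ^ k • homog a X k := by
  simp only [homog, wordProd_smul, List.length_ofFn, Finset.smul_sum, smul_comm (c ^ k)]

lemma homog_zero_degree (a : List (Fin n) → ℂ) (X : Fin n → H →L[ℂ] H) :
    homog a X 0 = a [] • 1 := by
  simp [homog, wordProd]

lemma homog_one_degree (a : List (Fin n) → ℂ) (X : Fin n → H →L[ℂ] H) :
    homog a X 1 = ∑ i, a [i] • X i := by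
  rw [homog, ← (Equiv.funUnique (Fin 1) (Fin n)).symm.sum_comp]
  simp [wordProd]

lemma homog_eq_zero_of_coeff_eq_zero {a : List (Fin n) → ℂ} {k : ℕ}
    (ha : ∀ w, w.length = k → a w = 0) (X : Fin n → H →L[ℂ] H) : homog a X k = 0 :=
  Finset.sum_eq_zero fun w _ => by rw [ha _ List.length_ofFn, zero_smul]

lemma homog_eq_zero_of_mul_eq_zero (a : List (Fin n) → ℂ) {X : Fin n → H →L[ℂ] H}
    (hX : ∀ i j, X i * X j = 0) {k : ℕ} (hk : 2 ≤ k) : homog a X k = 0 := by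
  obtain ⟨k, rfl⟩ := Nat.exists_eq_add_of_le' hk
  refine Finset.sum_eq_zero fun w _ => ?_
  have hw : wordProd X (List.ofFn w) = 0 := by
    simp only [wordProd, List.ofFn_succ, List.map_cons, List.prod_cons, ← mul_assoc, hX, zero_mul]
  rw [hw, smul_zero]

lemma tendsto_sum_homog_of_degree_le_one {a : List (Fin n) → ℂ} {X : Fin n → H →L[ℂ] H}
    (hz : ∀ k ≥ 2, homog a X k = 0) :
    Tendsto (fun N => ∑ k ∈ Finset.range N, homog a X k) atTop
      (nhds (a [] • 1 + ∑ i, a [i] • X i)) := by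
  refine tendsto_atTop_of_eventually_const (i₀ := 2) fun N hN => ?_
  rw [Finset.eventually_constant_sum hz hN, Finset.sum_range_succ, Finset.sum_range_one,
    homog_zero_degree, homog_one_degree]

/-- The coefficients of the linear form `∑ i, u i • X i`. -/
def linearCoeff (u : Fin n → ℂ) : List (Fin n) → ℂ
  | [i] => u i
  | _ => 0

lemma linearCoeff_eq_zero (u : Fin n → ℂ) {w : List (Fin n)} (hw : w.length ≠ 1) :
    linearCoeff u w = 0 := by
  match w, hw with
  | [], _ => rfl
  | _ :: _ :: _, _ => rfl

/-- The matrix of degree-one coefficients, i.e. the derivative at the origin of the map whose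
`j`-th component has coefficients `a j`. It acts on rows from the right, so `j` indexes columns. -/
def linearPart (a : Fin m → List (Fin n) → ℂ) : Matrix (Fin n) (Fin m) ℂ :=
  Matrix.of fun i j => a j [i]

lemma linearPart_linearCoeff (U : Matrix (Fin n) (Fin m) ℂ) :
    linearPart (fun j => linearCoeff fun i => U i j) = U := rfl

end PowerSeries

section Creation

variable {e : List (Fin n) → H} {N : ℕ}

/-- The left creation operators `e_w ↦ e_{g_i w}` of the full Fock space with orthonormal basis
`e`, set to zero on words of length at least `N` and on the orthogonal complement of `e`. The
truncation makes them finite sums of rank-one operators. -/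
def creation (e : List (Fin n) → H) (N : ℕ) (i : Fin n) : H →L[ℂ] H :=
  ∑ w ∈ (List.finite_length_lt (Fin n) N).toFinset, rankOne ℂ (e (i :: w)) (e w)

lemma creation_apply (he : Orthonormal ℂ e) (i : Fin n) (w : List (Fin n)) :
    creation e N i (e w) = if w.length < N then e (i :: w) else 0 := by
  simp [creation, orthonormal_iff_ite.mp he]

lemma creation_one_mul_creation_one (he : Orthonormal ℂ e) (i j : Fin n) :
    creation e 1 i * creation e 1 j = 0 := by
  have hij : inner ℂ (e []) (e [j]) = 0 := he.2 (by simp)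
  ext h
  simp [creation, hij]

lemma wordProd_creation_apply (he : Orthonormal ℂ e) (w : List (Fin n)) :
    wordProd (creation e N) w (e []) = if w.length ≤ N then e w else 0 := by
  induction w with
  | nil => simp [wordProd]
  | cons i w ih =>
    change creation e N i (wordProd (creation e N) w (e [])) = _
    rw [ih, apply_ite (creation e N i), map_zero, creation_apply he, List.length_cons]
    grind

lemma inner_wordProd_creation (he : Orthonormal ℂ e) {w : List (Fin n)} (hw : w.length ≤ N)
    (v : List (Fin n)) :
    inner ℂ (e w) (wordProd (creation e N) v (e [])) = if w = v then 1 else 0 := by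
  rw [wordProd_creation_apply he]
  split_ifs with hv hwv hwv
  · rw [orthonormal_iff_ite.mp he, if_pos hwv]
  · rw [orthonormal_iff_ite.mp he, if_neg hwv]
  · exact absurd (hwv ▸ hw) hv
  · exact inner_zero_right _

lemma inner_homog_creation (he : Orthonormal ℂ e) {w : List (Fin n)} (hw : w.length ≤ N)
    (a : List (Fin n) → ℂ) (k : ℕ) :
    inner ℂ (e w) (homog a (creation e N) k (e [])) = if w.length = k then a w else 0 := by
  simp only [homog, sum_apply, smul_apply, inner_sum, inner_smul_right,
    inner_wordProd_creation he hw, mul_ite, mul_one, mul_zero]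
  split_ifs with hk
  · subst hk
    have hget (v : Fin w.length → Fin n) : w = List.ofFn v ↔ w.get = v := by
      rw [← List.ofFn_inj, List.ofFn_get]
    simp [hget]
  · refine Finset.sum_eq_zero fun v _ => if_neg ?_
    rintro rfl
    exact hk List.length_ofFn

end Creation

variable [CompleteSpace H]

section RowNorm

lemma rowNorm_eq_sqrt_dotProduct (X : Fin n → H →L[ℂ] H) :
    rowNorm X = √‖X ⬝ᵥ star X‖ := rfl

lemma rowNorm_smul (c : ℂ) (X : Fin n → H →L[ℂ] H) : rowNorm (c • X) = ‖c‖ * rowNorm X := by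
  rw [rowNorm_eq_sqrt_dotProduct, star_smul, smul_dotProduct, dotProduct_smul, smul_smul,
    norm_smul, norm_mul, norm_star, Real.sqrt_mul (mul_self_nonneg _),
    Real.sqrt_mul_self (norm_nonneg c), rowNorm_eq_sqrt_dotProduct]

lemma rowNorm_le_iff {X : Fin n → H →L[ℂ] H} {c : ℝ} (hc : 0 ≤ c) :
    rowNorm X ≤ c ↔ ∀ h, ∑ i, ‖adjoint (X i) h‖ ^ 2 ≤ c ^ 2 * ‖h‖ ^ 2 := by
  have hpos : 0 ≤ ∑ i, X i * adjoint (X i) :=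
    Finset.sum_nonneg fun i _ => mul_star_self_nonneg (X i)
  have hinner (h : H) : RCLike.re (inner ℂ ((∑ i, X i * adjoint (X i)) h) h) =
      ∑ i, ‖adjoint (X i) h‖ ^ 2 := by
    rw [sum_apply, sum_inner, map_sum]
    refine Finset.sum_congr rfl fun i _ => ?_
    rw [mul_apply_eq_comp, ← adjoint_inner_right, inner_self_eq_norm_sq]
  have hsa : IsSelfAdjoint (algebraMap ℝ (H →L[ℂ] H) (c ^ 2) - ∑ i, X i * adjoint (X i)) :=
    .sub (.algebraMap _ (.all _)) (.of_nonneg hpos)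
  rw [rowNorm, Real.sqrt_le_iff, and_iff_right hc,
    CStarAlgebra.norm_le_iff_le_algebraMap _ (sq_nonneg c) hpos, ContinuousLinearMap.le_def,
    isPositive_def', and_iff_right hsa]
  refine forall_congr' fun h => ?_
  rw [reApplyInnerSelf_apply, sub_apply, inner_sub_left, map_sub, hinner, sub_nonneg,
    Algebra.algebraMap_eq_smul_one, smul_apply, one_apply_eq_self, inner_smul_left_eq_smul,
    RCLike.smul_re, inner_self_eq_norm_sq]

lemma norm_le_rowNorm (X : Fin n → H →L[ℂ] H) (j : Fin n) : ‖X j‖ ≤ rowNorm X := by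
  have h0 : 0 ≤ rowNorm X := Real.sqrt_nonneg _
  rw [← LinearIsometryEquiv.norm_map adjoint (X j)]
  refine opNorm_le_bound _ h0 fun h => ?_
  have hrow := (rowNorm_le_iff h0).mp le_rfl h
  have hj := Finset.single_le_sum (f := fun i => ‖adjoint (X i) h‖ ^ 2)
    (fun _ _ => sq_nonneg _) (Finset.mem_univ j)
  rw [← sq_le_sq₀ (norm_nonneg _) (mul_nonneg h0 (norm_nonneg h)), mul_pow]
  exact hj.trans hrow

lemma zero_mem_ball (hγ : 0 < γ) : (0 : Fin n → H →L[ℂ] H) ∈ ball n H γ := by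
  simpa [ball, rowNorm] using hγ

lemma rowNorm_rowMap {U : Matrix (Fin n) (Fin m) ℂ} (hU : U * Uᴴ = 1)
    (X : Fin n → H →L[ℂ] H) : rowNorm (rowMap U X) = rowNorm X := by
  have hmap : U.map (algebraMap ℂ (H →L[ℂ] H)) * (U.map (algebraMap ℂ (H →L[ℂ] H)))ᴴ = 1 := by
    rw [← Matrix.conjTranspose_map _ (algebraMap_star_comm ·), ← Matrix.map_mul, hU,
      Matrix.map_one _ (map_zero _) (map_one _)]
  rw [rowNorm_eq_sqrt_dotProduct, rowMap, Matrix.star_vecMul, Matrix.dotProduct_mulVec,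
    Matrix.vecMul_vecMul, hmap, Matrix.vecMul_one, rowNorm_eq_sqrt_dotProduct]

end RowNorm

section RepOn

variable {a : List (Fin n) → ℂ} {F : (Fin n → H →L[ℂ] H) → H →L[ℂ] H}

lemma RepOn.apply_of_degree_le_one (ha : RepOn γ a F) {X : Fin n → H →L[ℂ] H}
    (hX : X ∈ ball n H γ) (hz : ∀ k ≥ 2, homog a X k = 0) :
    F X = a [] • 1 + ∑ i, a [i] • X i :=
  tendsto_nhds_unique (ha X hX) (tendsto_sum_homog_of_degree_le_one hz)

lemma RepOn.apply_of_mul_eq_zero (ha : RepOn γ a F) {X : Fin n → H →L[ℂ] H}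
    (hX : X ∈ ball n H γ) (hXX : ∀ i j, X i * X j = 0) :
    F X = a [] • 1 + ∑ i, a [i] • X i :=
  ha.apply_of_degree_le_one hX fun _ => homog_eq_zero_of_mul_eq_zero a hXX

lemma RepOn.coeff_nil_eq_zero [Nontrivial H] (ha : RepOn γ a F) (hγ : 0 < γ) (h0 : F 0 = 0) :
    a [] = 0 := by
  have h := ha.apply_of_mul_eq_zero (zero_mem_ball hγ) fun _ _ => mul_zero 0
  simpa [h0] using h.symm

lemma repOn_linearCoeff (γ : ℝ) (u : Fin n → ℂ) :
    RepOn γ (linearCoeff u) fun X : Fin n → H →L[ℂ] H => ∑ i, u i • X i := by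
  intro X _
  have hz : ∀ k ≥ 2, homog (linearCoeff u) X k = 0 := fun k hk =>
    homog_eq_zero_of_coeff_eq_zero (fun w hw => linearCoeff_eq_zero u (by lia)) X
  simpa [linearCoeff] using tendsto_sum_homog_of_degree_le_one hz

end RepOn

section CoefficientExtraction

variable {e : List (Fin n) → H} {N : ℕ} {a : List (Fin n) → ℂ}
  {F : (Fin n → H →L[ℂ] H) → H →L[ℂ] H}

lemma rowNorm_creation_le_one (he : Orthonormal ℂ e) : rowNorm (creation e N) ≤ 1 := by
  set W := (List.finite_length_lt (Fin n) N).toFinset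
  have hnorm (i : Fin n) (h : H) :
      ‖adjoint (creation e N i) h‖ ^ 2 = ∑ w ∈ W, ‖inner ℂ (e (i :: w)) h‖ ^ 2 := by
    simp only [creation, map_sum, sum_apply, adjoint_rankOne, rankOne_apply]
    exact he.orthogonalFamily.norm_sum (fun w => inner ℂ (e (i :: w)) h) W
  have hcons : Orthonormal ℂ fun p : Fin n × List (Fin n) => e (p.1 :: p.2) :=
    he.comp _ fun p q hpq => Prod.ext_iff.mpr (List.cons.inj hpq)
  refine (rowNorm_le_iff zero_le_one).mpr fun h => ?_
  simp only [hnorm, ← Finset.sum_product', one_pow, one_mul]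
  exact hcons.sum_inner_products_le h

lemma smul_creation_mem_ball (he : Orthonormal ℂ e) {r : ℂ} (hr : ‖r‖ < γ) :
    r • creation e N ∈ ball n H γ := by
  refine lt_of_le_of_lt ?_ hr
  rw [rowNorm_smul]
  exact mul_le_of_le_one_right (norm_nonneg r) (rowNorm_creation_le_one he)

lemma RepOn.inner_apply_creation (ha : RepOn γ a F) (he : Orthonormal ℂ e) {r : ℂ}
    (hr : ‖r‖ < γ) {w : List (Fin n)} (hw : w.length ≤ N) :
    inner ℂ (e w) (F (r • creation e N) (e [])) = a w * r ^ w.length := by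
  have hcont : Continuous fun T : H →L[ℂ] H => inner ℂ (e w) (T (e [])) := by fun_prop
  refine tendsto_nhds_unique
    ((hcont.tendsto _).comp (ha _ (smul_creation_mem_ball he hr))) ?_
  refine tendsto_atTop_of_eventually_const (i₀ := w.length + 1) fun M hM => ?_
  simp only [Function.comp_apply, sum_apply, inner_sum, homog_smul, smul_apply, inner_smul_right,
    inner_homog_creation he hw, mul_ite, mul_zero]
  rw [Finset.sum_ite_eq, if_pos (Finset.mem_range.mpr hM), mul_comm]

end CoefficientExtraction

section CoefficientBounds

variable {a : List (Fin n) → ℂ} {F : (Fin n → H →L[ℂ] H) → H →L[ℂ] H}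

lemma RepOn.sum_norm_coeff_sq_le_of_lt (hH : ¬ FiniteDimensional ℂ H) (ha : RepOn γ a F)
    (hF : ∀ X ∈ ball n H γ, ‖F X‖ ≤ δ) (V : Finset (List (Fin n))) {r : ℝ} (hr0 : 0 ≤ r)
    (hr : r < γ) : ∑ w ∈ V, (‖a w‖ * r ^ w.length) ^ 2 ≤ δ ^ 2 := by
  obtain ⟨e, he⟩ := exists_orthonormal_of_countable (ι := List (Fin n)) hH
  have hr' : ‖(r : ℂ)‖ < γ := by rwa [Complex.norm_of_nonneg hr0]
  set T := F ((r : ℂ) • creation e (V.sup List.length)) with hT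
  have hcoeff (w) (hw : w ∈ V) : ‖inner ℂ (e w) (T (e []))‖ = ‖a w‖ * r ^ w.length := by
    rw [hT, ha.inner_apply_creation he hr' (Finset.le_sup hw), norm_mul, norm_pow,
      Complex.norm_of_nonneg hr0]
  calc ∑ w ∈ V, (‖a w‖ * r ^ w.length) ^ 2
      = ∑ w ∈ V, ‖inner ℂ (e w) (T (e []))‖ ^ 2 :=
        Finset.sum_congr rfl fun w hw => by rw [hcoeff w hw]
    _ ≤ ‖T (e [])‖ ^ 2 := he.sum_inner_products_le _
    _ ≤ ‖T‖ ^ 2 := by gcongr; exact T.unit_le_opNorm _ (he.1 []).le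
    _ ≤ δ ^ 2 := by gcongr; exact hF _ (smul_creation_mem_ball he hr')

theorem RepOn.sum_norm_coeff_sq_le (hH : ¬ FiniteDimensional ℂ H) (hγ : 0 < γ)
    (ha : RepOn γ a F) (hF : ∀ X ∈ ball n H γ, ‖F X‖ ≤ δ) (V : Finset (List (Fin n))) :
    ∑ w ∈ V, (‖a w‖ * γ ^ w.length) ^ 2 ≤ δ ^ 2 := by
  have hcont : Continuous fun r : ℝ => ∑ w ∈ V, (‖a w‖ * r ^ w.length) ^ 2 := by fun_prop
  refine le_of_tendsto ((hcont.tendsto γ).mono_left (nhdsWithin_le_nhds (s := Set.Iio γ))) ?_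
  filter_upwards [Ioo_mem_nhdsLT hγ] with r hr
  exact ha.sum_norm_coeff_sq_le_of_lt hH hF V hr.1.le hr.2

lemma RepOn.norm_coeff_sq_add_sum_linear_le (hH : ¬ FiniteDimensional ℂ H) (hγ : 0 < γ)
    (ha : RepOn γ a F) (hF : ∀ X ∈ ball n H γ, ‖F X‖ ≤ δ) {w : List (Fin n)}
    (hw : w.length ≠ 1) :
    (‖a w‖ * γ ^ w.length) ^ 2 + γ ^ 2 * ∑ i, ‖a [i]‖ ^ 2 ≤ δ ^ 2 := by
  have hnot : w ∉ Finset.univ.image fun i : Fin n => [i] := by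
    simp only [Finset.mem_image, Finset.mem_univ, true_and, not_exists]
    rintro i rfl
    exact hw rfl
  have h := ha.sum_norm_coeff_sq_le hH hγ hF (insert w (Finset.univ.image fun i => [i]))
  rw [Finset.sum_insert hnot, Finset.sum_image fun _ _ _ _ h => List.singleton_inj.mp h] at h
  simpa [mul_pow, Finset.sum_mul, mul_comm (γ ^ 2)] using h

lemma RepOn.sum_norm_linear_sq_le_one (hH : ¬ FiniteDimensional ℂ H) (hγ : 0 < γ)
    (ha : RepOn γ a F) (hF : ∀ X ∈ ball n H γ, ‖F X‖ ≤ γ) : ∑ i, ‖a [i]‖ ^ 2 ≤ 1 := by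
  have h := ha.norm_coeff_sq_add_sum_linear_le hH hγ hF (w := []) (by simp)
  refine le_of_mul_le_mul_left ?_ (pow_pos hγ 2)
  linarith [sq_nonneg (‖a []‖ * γ ^ ([] : List (Fin n)).length)]

lemma RepOn.coeff_eq_zero (hH : ¬ FiniteDimensional ℂ H) (hγ : 0 < γ) (ha : RepOn γ a F)
    (hF : ∀ X ∈ ball n H γ, ‖F X‖ ≤ γ) (h1 : ∑ i, ‖a [i]‖ ^ 2 = 1) {w : List (Fin n)}
    (hw : w.length ≠ 1) : a w = 0 := by
  have h := ha.norm_coeff_sq_add_sum_linear_le hH hγ hF hw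
  rw [h1, mul_one, add_le_iff_nonpos_left] at h
  have hzero := pow_eq_zero_iff two_ne_zero |>.mp (le_antisymm h (sq_nonneg _))
  simpa [hγ.ne'] using hzero

theorem RepOn.apply_eq_linear (hH : ¬ FiniteDimensional ℂ H) (hγ : 0 < γ) (ha : RepOn γ a F)
    (hF : ∀ X ∈ ball n H γ, ‖F X‖ ≤ γ) (h1 : ∑ i, ‖a [i]‖ ^ 2 = 1) {X : Fin n → H →L[ℂ] H}
    (hX : X ∈ ball n H γ) : F X = ∑ i, a [i] • X i := by
  have hcoeff {w : List (Fin n)} (hw : w.length ≠ 1) : a w = 0 := ha.coeff_eq_zero hH hγ hF h1 hw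
  have hz : ∀ k ≥ 2, homog a X k = 0 := fun k hk =>
    homog_eq_zero_of_coeff_eq_zero (fun w hw => hcoeff (by lia)) X
  rw [ha.apply_of_degree_le_one hX hz, hcoeff (by simp), zero_smul, zero_add]

end CoefficientBounds

section ChainRule

variable {F : (Fin n → H →L[ℂ] H) → Fin m → H →L[ℂ] H}
  {G : (Fin m → H →L[ℂ] H) → Fin l → H →L[ℂ] H} {a : Fin m → List (Fin n) → ℂ}
  {b : Fin l → List (Fin m) → ℂ} {c : Fin l → List (Fin n) → ℂ}

/- Read off at a tuple `X` with `X i * X j = 0`, on which power series reduce to their affine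
parts. -/
theorem linearPart_comp (hH : ¬ FiniteDimensional ℂ H) (hγ : 0 < γ)
    (ha : ∀ j, RepOn γ (a j) fun X => F X j) (ha0 : ∀ j, a j [] = 0)
    (hF : Set.MapsTo F (ball n H γ) (ball m H δ)) (hb : ∀ k, RepOn δ (b k) fun Y => G Y k)
    (hc : ∀ k, RepOn γ (c k) fun X => G (F X) k) :
    linearPart c = linearPart a * linearPart b := by
  obtain ⟨e, he⟩ := exists_orthonormal_of_countable (ι := List (Fin n)) hH
  obtain ⟨r, hr0, hrγ⟩ := exists_between hγ
  have hr : ‖(r : ℂ)‖ < γ := by rwa [Complex.norm_of_nonneg hr0.le]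
  obtain ⟨X, hXdef⟩ : ∃ X, X = (r : ℂ) • creation e 1 := ⟨_, rfl⟩
  have hX : X ∈ ball n H γ := hXdef ▸ smul_creation_mem_ball he hr
  have hXX (i j) : X i * X j = 0 := by
    rw [hXdef, Pi.smul_apply, Pi.smul_apply, smul_mul_smul_comm,
      creation_one_mul_creation_one he, smul_zero]
  have hFX (j) : F X j = ∑ i, a j [i] • X i := by
    rw [(ha j).apply_of_mul_eq_zero hX hXX, ha0, zero_smul, zero_add]
  have hFF (i j) : F X i * F X j = 0 := by
    simp only [hFX, Finset.sum_mul_sum, smul_mul_smul_comm, hXX, smul_zero, Finset.sum_const_zero]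
  ext i k
  have hlhs : inner ℂ (e [i]) (G (F X) k (e [])) = c k [i] * r := by
    simpa [hXdef] using (hc k).inner_apply_creation he hr (N := 1) (w := [i]) le_rfl
  have hrhs : inner ℂ (e [i]) (G (F X) k (e [])) = ∑ j, b k [j] * (a j [i] * r) := by
    have hnil : inner ℂ (e [i]) (e []) = 0 := he.2 (by simp)
    have hcoeff (j) : inner ℂ (e [i]) (F X j (e [])) = a j [i] * r := by
      simpa [hXdef] using (ha j).inner_apply_creation he hr (N := 1) (w := [i]) le_rfl
    rw [(hb k).apply_of_mul_eq_zero (hF hX) hFF]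
    simp [hnil, hcoeff]
  refine mul_right_cancel₀ (Complex.ofReal_ne_zero.mpr hr0.ne') ?_
  rw [linearPart, Matrix.of_apply, ← hlhs, hrhs, Matrix.mul_apply, Finset.sum_mul]
  exact Finset.sum_congr rfl fun j _ => by simp only [linearPart, Matrix.of_apply]; ring

lemma linearPart_mul_linearPart_eq_one {G : (Fin m → H →L[ℂ] H) → Fin n → H →L[ℂ] H}
    {b : Fin n → List (Fin m) → ℂ} (hH : ¬ FiniteDimensional ℂ H) (hγ : 0 < γ)
    (ha : ∀ j, RepOn γ (a j) fun X => F X j) (ha0 : ∀ j, a j [] = 0)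
    (hF : Set.MapsTo F (ball n H γ) (ball m H δ)) (hb : ∀ k, RepOn δ (b k) fun Y => G Y k)
    (hGF : Set.LeftInvOn G F (ball n H γ)) : linearPart a * linearPart b = 1 := by
  have hid (k : Fin n) : RepOn γ (linearCoeff fun i => (1 : Matrix (Fin n) (Fin n) ℂ) i k)
      fun X : Fin n → H →L[ℂ] H => G (F X) k := fun X hX => by
    simpa only [hGF hX, ← rowMap_apply, rowMap_one] using
      repOn_linearCoeff γ (fun i => (1 : Matrix (Fin n) (Fin n) ℂ) i k) X hX
  rw [← linearPart_comp hH hγ ha ha0 hF hb hid, linearPart_linearCoeff]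

end ChainRule

section Automorphisms

variable {Ψ Ψ' : (Fin n → H →L[ℂ] H) → Fin n → H →L[ℂ] H}

lemma isFreeHoloMap_rowMap (γ : ℝ) (U : Matrix (Fin n) (Fin m) ℂ) :
    IsFreeHoloMap γ (rowMap U : (Fin n → H →L[ℂ] H) → Fin m → H →L[ℂ] H) := fun j => by
  simpa only [rowMap_apply] using ⟨_, repOn_linearCoeff γ fun i => U i j⟩

lemma IsFreeAut.congr (hΨ : IsFreeAut γ Ψ) (h : Set.EqOn Ψ Ψ' (ball n H γ)) :
    IsFreeAut γ Ψ' := by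
  obtain ⟨hholo, hmaps, Φ, hΦ, hΦmaps, hleft, hright⟩ := hΨ
  refine ⟨fun j => ?_, hmaps.congr h, Φ, hΦ, hΦmaps, fun X hX => ?_, fun X hX => ?_⟩
  · obtain ⟨a, ha⟩ := hholo j
    exact ⟨a, fun X hX => by simpa only [← h hX] using ha X hX⟩
  · rw [← h hX, hleft X hX]
  · rw [← h (hΦmaps hX), hright X hX]

lemma isFreeAut_rowMap (γ : ℝ) {U : Matrix (Fin n) (Fin n) ℂ}
    (hU : U ∈ Matrix.unitaryGroup (Fin n) ℂ) :
    IsFreeAut γ (rowMap U : (Fin n → H →L[ℂ] H) → Fin n → H →L[ℂ] H) := by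
  have hmul : U * Uᴴ = 1 := Matrix.mem_unitaryGroup_iff.mp hU
  have hmul' : Uᴴ * U = 1 := Matrix.mem_unitaryGroup_iff'.mp hU
  refine ⟨isFreeHoloMap_rowMap γ U, fun X hX => ?_, rowMap Uᴴ, isFreeHoloMap_rowMap γ Uᴴ,
    fun X hX => ?_, fun X _ => ?_, fun X _ => ?_⟩
  · exact (rowNorm_rowMap hmul X).trans_lt hX
  · exact (rowNorm_rowMap (by rwa [Matrix.conjTranspose_conjTranspose]) X).trans_lt hX
  · rw [rowMap_rowMap, hmul, rowMap_one]
  · rw [rowMap_rowMap, hmul', rowMap_one]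

lemma IsFreeAut.exists_eqOn_rowMap (hH : ¬ FiniteDimensional ℂ H) (hγ : 0 < γ)
    (hΨ : IsFreeAut γ Ψ) (h0 : Ψ 0 = 0) :
    ∃ U ∈ Matrix.unitaryGroup (Fin n) ℂ, Set.EqOn Ψ (rowMap U) (ball n H γ) := by
  obtain ⟨hholo, hmaps, Φ, hΦ, hΦmaps, hleft, -⟩ := hΨ
  choose a ha using hholo
  choose b hb using hΦ
  have : Nontrivial H := by
    by_contra h
    have := not_nontrivial_iff_subsingleton.mp h
    exact hH inferInstance
  have hbound {F : (Fin n → H →L[ℂ] H) → Fin n → H →L[ℂ] H}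
      (hF : Set.MapsTo F (ball n H γ) (ball n H γ)) (j : Fin n) :
      ∀ X ∈ ball n H γ, ‖F X j‖ ≤ γ := fun X hX => (norm_le_rowNorm _ j).trans (hF hX).le
  have hAB : linearPart a * linearPart b = 1 :=
    linearPart_mul_linearPart_eq_one hH hγ ha
      (fun j => (ha j).coeff_nil_eq_zero hγ (congrFun h0 j)) hmaps hb hleft
  have hA (j) := (ha j).sum_norm_linear_sq_le_one hH hγ (hbound hmaps j)
  have hB (j) := (hb j).sum_norm_linear_sq_le_one hH hγ (hbound hΦmaps j)
  have hadj : linearPart b = (linearPart a)ᴴ := eq_conjTranspose_of_mul_eq_one hAB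
    ((Finset.sum_le_sum fun j _ => hA j).trans (by simp))
    ((Finset.sum_le_sum fun j _ => hB j).trans (by simp))
  have hU : linearPart a ∈ Matrix.unitaryGroup (Fin n) ℂ :=
    Matrix.mem_unitaryGroup_iff.mpr (by rwa [hadj] at hAB)
  refine ⟨_, hU, fun X hX => funext fun j => ?_⟩
  rw [rowMap_apply]
  exact (ha j).apply_eq_linear hH hγ (hbound hmaps j) (sum_norm_sq_col_of_mem_unitaryGroup hU j) hX

end Automorphisms

end NC

open NC in
theorem aut_fixing_origin_iff_unitary_general
    {H : Type*} [NormedAddCommGroup H] [InnerProductSpace ℂ H] [CompleteSpace H]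
    (hH : ¬ FiniteDimensional ℂ H) {n : ℕ} {γ : ℝ} (hγ : 0 < γ)
    (Ψ : (Fin n → H →L[ℂ] H) → Fin n → H →L[ℂ] H) (h0 : Ψ 0 = 0) :
    IsFreeAut γ Ψ ↔
      ∃ U ∈ Matrix.unitaryGroup (Fin n) ℂ,
        ∀ X ∈ ball n H γ, ∀ j, Ψ X j = ∑ i, U i j • X i := by
  constructor
  · intro hΨ
    obtain ⟨U, hU, hΨU⟩ := hΨ.exists_eqOn_rowMap hH hγ h0
    exact ⟨U, hU, fun X hX j => by rw [hΨU hX, rowMap_apply]⟩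
  · rintro ⟨U, hU, hΨU⟩
    exact (isFreeAut_rowMap γ hU).congr fun X hX =>
      funext fun j => by rw [rowMap_apply, hΨU X hX j]

open NC in
/-- A free holomorphic self-map `Ψ` of `[B(H)ⁿ]_1` with `Ψ(0) = 0` is a free holomorphic
automorphism of `[B(H)ⁿ]_1` if and only if it is implemented by a unitary operator `U` on
`ℂⁿ`, i.e. `Ψ(X) = [X₁,…,Xₙ]U`. -/
theorem aut_fixing_origin_iff_unitary
    {H : Type*} [NormedAddCommGroup H] [InnerProductSpace ℂ H] [CompleteSpace H]
    [TopologicalSpace.SeparableSpace H] (hH : ¬ FiniteDimensional ℂ H)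
    {n : ℕ}
    (Ψ : (Fin n → H →L[ℂ] H) → Fin n → H →L[ℂ] H)
    (hΨ : IsFreeHoloMap 1 Ψ) (hmaps : Set.MapsTo Ψ (ball n H 1) (ball n H 1))
    (h0 : Ψ 0 = 0) :
    IsFreeAut 1 Ψ ↔
      ∃ U ∈ Matrix.unitaryGroup (Fin n) ℂ,
        ∀ X ∈ ball n H 1, ∀ j, Ψ X j = ∑ i, U i j • X i :=
  aut_fixing_origin_iff_unitary_general hH one_pos Ψ h0
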